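/- Let M be a projective left R-module. If the lattice Λ^{fi}(M) of fully invariant submodules is normal, then M is strongly harmonic. If in addition Λ^{fi}(M) is compact, then the converse also holds, so the two conditions are equivalent. -/

import Mathlib

/-!
A proper fully invariant submodule `N` is maximal exactly when `N + X = M` for every fully invariant
`X` not contained in `N`; with this, normality applied to two distinct maximal fully invariant
submodules immediately gives strong harmonicity.

For the converse, compactness supplies enough maximal fully invariant submodules, and projectivity
enters through a splitting property: an endomorphism with image in `A + B` is a sum of two
endomorphisms with images in `A` and in `B` (`exists_add_of_range_le_sup`). This yields

* `smProd_sup_eq_bot`: if `B · A₁ = 0 = B · A₂`, then `B · (A₁ + A₂) = 0`;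
* `sup_inf_eq_top`: if `N + X = M = N + Y` with `N` and `X` fully invariant, then
  `N + (X ∩ Y) = M`, which plays the role of primeness when `N` is maximal.

The converse is then the classical two-step compactness argument that Hausdorff implies normal,
each step being an instance of `exists_sup_eq_top`. Given `N + L = M`, fix a maximal `Q ⊇ L`; every
maximal `P ⊇ N` differs from `Q`, so strong harmonicity separates `P` from `Q`, and compactness
gives `A, B` with `N + A = M`, `Q + B = M`, `B · A = 0`. Letting `Q` vary, a second use of
compactness replaces `Q` by `L`.
-/

open Submodule

variable {R : Type*} [Ring R] {M : Type*} [AddCommGroup M] [Module R M]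

/-- The product `N ·_M L = Σ { f(N) : f ∈ Hom_R(M, L) }` of submodules of `M`. -/
def SmProd (N L : Submodule R M) : Submodule R M :=
  ⨆ f : M →ₗ[R] L, N.map (L.subtype ∘ₗ f)

/-- A submodule is fully invariant if it is stable under every endomorphism of `M`. -/
def IsFI (N : Submodule R M) : Prop :=
  ∀ f : M →ₗ[R] M, N.map f ≤ N

/-- `N` is a maximal proper fully invariant submodule of `M`
(a coatom of the lattice of fully invariant submodules). -/
def IsMaxFI (N : Submodule R M) : Prop :=
  IsFI N ∧ N ≠ ⊤ ∧ ∀ L : Submodule R M, IsFI L → N < L → L = ⊤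

/-- `M` is strongly harmonic if for every pair of distinct maximal proper fully invariant
submodules `N, L` there are fully invariant `N', L'` with `N' ⊄ N`, `L' ⊄ L`, `L' ·_M N' = 0`. -/
def StronglyHarmonic (R M : Type*) [Ring R] [AddCommGroup M] [Module R M] : Prop :=
  ∀ N L : Submodule R M, IsMaxFI N → IsMaxFI L → N ≠ L →
    ∃ N' L' : Submodule R M, IsFI N' ∧ IsFI L' ∧ ¬ N' ≤ N ∧ ¬ L' ≤ L ∧ SmProd L' N' = ⊥

/-- `Ann_M(K) = Σ { L ≤ M : L ·_M K = 0 }`. -/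
def AnnM (K : Submodule R M) : Submodule R M :=
  sSup {L : Submodule R M | SmProd L K = ⊥}

/-- `Ler(N) = Σ { K fully invariant : N + Ann_M(K) = M }`. -/
def Ler (N : Submodule R M) : Submodule R M :=
  sSup {K : Submodule R M | IsFI K ∧ N ⊔ AnnM K = ⊤}

/-- `M` is quasi-projective. -/
def QuasiProjective (R M : Type*) [Ring R] [AddCommGroup M] [Module R M] : Prop :=
  ∀ (K : Submodule R M) (h : M →ₗ[R] M ⧸ K), ∃ g : M →ₗ[R] M, K.mkQ ∘ₗ g = h

/-- The lattice `Λ^{fi}(M)` of fully invariant submodules is compact. -/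
def FICompact (R M : Type*) [Ring R] [AddCommGroup M] [Module R M] : Prop :=
  ∀ S : Set (Submodule R M), (∀ N ∈ S, IsFI N) → sSup S = ⊤ →
    ∃ F : Finset (Submodule R M), ↑F ⊆ S ∧ sSup (F : Set (Submodule R M)) = ⊤

/-- The lattice `Λ^{fi}(M)` is normal. -/
def FINormal (R M : Type*) [Ring R] [AddCommGroup M] [Module R M] : Prop :=
  ∀ N L : Submodule R M, IsFI N → IsFI L → N ⊔ L = ⊤ →
    ∃ N' L' : Submodule R M, IsFI N' ∧ IsFI L' ∧
      N ⊔ L' = ⊤ ∧ N' ⊔ L = ⊤ ∧ SmProd N' L' = ⊥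

/-- Gelfand module. -/
def Gelfand (R M : Type*) [Ring R] [AddCommGroup M] [Module R M] : Prop :=
  ∀ N L : Submodule R M, IsCoatom N → IsCoatom L → N ≠ L →
    ∃ N' L' : Submodule R M, IsFI N' ∧ IsFI L' ∧ ¬ N' ≤ N ∧ ¬ L' ≤ L ∧ SmProd L' N' = ⊥

/-- The hull-kernel topology on `mx^{fi}(M)`, generated by the sets
`m(K) = {𝓜 : K ⊄ 𝓜}` for `K` fully invariant. -/
def mxfiTop (R M : Type*) [Ring R] [AddCommGroup M] [Module R M] :
    TopologicalSpace {N : Submodule R M // IsMaxFI N} :=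
  TopologicalSpace.generateFrom
    {U | ∃ K : Submodule R M, IsFI K ∧ U = {𝓜 : {N : Submodule R M // IsMaxFI N} | ¬ K ≤ 𝓜.1}}

/-- The frame `Ψ(M)`. -/
def PsiSet (R M : Type*) [Ring R] [AddCommGroup M] [Module R M] : Set (Submodule R M) :=
  {N | IsFI N ∧ ∀ n ∈ N, N ⊔ AnnM (Submodule.span R {n}) = ⊤}

/-- The points (`∧`-irreducible elements) of `Ψ(M)`. -/
def PsiPt (R M : Type*) [Ring R] [AddCommGroup M] [Module R M] : Set (Submodule R M) :=
  {p | p ∈ PsiSet R M ∧ p ≠ ⊤ ∧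
    ∀ N ∈ PsiSet R M, ∀ L ∈ PsiSet R M, N ⊓ L ≤ p → N ≤ p ∨ L ≤ p}

/-- The topology on the point space of `Ψ(M)`, with opens generated by
`U(N) = {p : N ⊄ p}` for `N ∈ Ψ(M)`. -/
def psiPtTop (R M : Type*) [Ring R] [AddCommGroup M] [Module R M] :
    TopologicalSpace (PsiPt R M) :=
  TopologicalSpace.generateFrom
    {U | ∃ N ∈ PsiSet R M, U = {p : PsiPt R M | ¬ N ≤ p.1}}

/-- The vanishing of the product, expressed through endomorphisms of `M` only. -/
lemma smProd_eq_bot_iff {N L : Submodule R M} :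
    SmProd N L = ⊥ ↔ ∀ f : M →ₗ[R] M, LinearMap.range f ≤ L → ∀ x ∈ N, f x = 0 := by
  unfold SmProd
  rw [iSup_eq_bot]
  constructor
  · intro h f hf x hx
    have h1 := h (f.codRestrict L fun y => hf ⟨y, rfl⟩)
    rw [Submodule.eq_bot_iff] at h1
    exact h1 (f x) ⟨x, hx, rfl⟩
  · intro h f
    rw [Submodule.eq_bot_iff]
    rintro _ ⟨x, hx, rfl⟩
    refine h (L.subtype ∘ₗ f) ?_ x hx
    rintro _ ⟨y, rfl⟩
    exact (f y).2

/-- For `M` projective, an endomorphism with image in `A + B` lifts along the surjection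
`A × B → A + B`, and hence splits. -/
lemma exists_add_of_range_le_sup (hproj : Module.Projective R M) {A B : Submodule R M}
    (f : M →ₗ[R] M) (hf : LinearMap.range f ≤ A ⊔ B) :
    ∃ g h : M →ₗ[R] M, LinearMap.range g ≤ A ∧ LinearMap.range h ≤ B ∧ f = g + h := by
  let p : (A × B) →ₗ[R] M := A.subtype.coprod B.subtype
  have hp : LinearMap.range p = A ⊔ B := by
    simp [p, LinearMap.range_coprod]
  obtain ⟨k, hk⟩ := Module.projective_lifting_property p.rangeRestrict
    (f.codRestrict (LinearMap.range p) fun y => hp ▸ hf ⟨y, rfl⟩) p.surjective_rangeRestrict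
  refine ⟨A.subtype ∘ₗ LinearMap.fst R A B ∘ₗ k, B.subtype ∘ₗ LinearMap.snd R A B ∘ₗ k, ?_, ?_, ?_⟩
  · rintro _ ⟨y, rfl⟩
    exact (k y).1.2
  · rintro _ ⟨y, rfl⟩
    exact (k y).2.2
  · ext y
    have h1 := congrArg Subtype.val (LinearMap.congr_fun hk y)
    exact h1.symm

lemma IsFI.sup {N L : Submodule R M} (hN : IsFI N) (hL : IsFI L) : IsFI (N ⊔ L) := fun f => by
  rw [Submodule.map_sup]
  exact sup_le_sup (hN f) (hL f)

lemma IsFI.inf {N L : Submodule R M} (hN : IsFI N) (hL : IsFI L) : IsFI (N ⊓ L) := fun f =>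
  le_inf ((Submodule.map_mono inf_le_left).trans (hN f))
    ((Submodule.map_mono inf_le_right).trans (hL f))

lemma isFI_bot : IsFI (⊥ : Submodule R M) := fun f => by simp

lemma isFI_top : IsFI (⊤ : Submodule R M) := fun _ => le_top

lemma isFI_sSup {S : Set (Submodule R M)} (hS : ∀ N ∈ S, IsFI N) : IsFI (sSup S) := fun f => by
  rw [Submodule.map_le_iff_le_comap]
  exact sSup_le fun N hN => Submodule.map_le_iff_le_comap.1 ((hS N hN f).trans (le_sSup hN))

lemma IsMaxFI.sup_eq_top {N X : Submodule R M} (hN : IsMaxFI N) (hX : IsFI X) (h : ¬ X ≤ N) :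
    N ⊔ X = ⊤ :=
  hN.2.2 _ (hN.1.sup hX) (left_lt_sup.2 h)

/-- Splitting the identity of `M` as `f + g` along `N + Y`, the map `g` sends `N` into `N` and `X`
into `X ∩ Y`, because `N` and `X` are fully invariant. -/
lemma sup_inf_eq_top (hproj : Module.Projective R M) {N X Y : Submodule R M}
    (hN : IsFI N) (hX : IsFI X) (h1 : N ⊔ X = ⊤) (h2 : N ⊔ Y = ⊤) : N ⊔ (X ⊓ Y) = ⊤ := by
  obtain ⟨f, g, hf, hg, hfg⟩ := exists_add_of_range_le_sup hproj (A := N) (B := Y)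
    LinearMap.id (by rw [h2]; exact le_top)
  rw [eq_top_iff]
  intro m _
  obtain ⟨n, hn, x, hx, rfl⟩ := Submodule.mem_sup.1 (h1 ▸ Submodule.mem_top : m ∈ N ⊔ X)
  have h3 : n + x = (f (n + x) + g n) + g x := by
    rw [add_assoc, ← map_add g]
    exact LinearMap.congr_fun hfg (n + x)
  rw [h3]
  exact Submodule.add_mem_sup (N.add_mem (hf ⟨_, rfl⟩) (hN g ⟨n, hn, rfl⟩))
    ⟨hX g ⟨x, hx, rfl⟩, hg ⟨x, rfl⟩⟩

lemma smProd_sup_eq_bot (hproj : Module.Projective R M) {B A₁ A₂ : Submodule R M}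
    (h1 : SmProd B A₁ = ⊥) (h2 : SmProd B A₂ = ⊥) : SmProd B (A₁ ⊔ A₂) = ⊥ := by
  rw [smProd_eq_bot_iff] at *
  intro f hf x hx
  obtain ⟨g, h, hg, hh, rfl⟩ := exists_add_of_range_le_sup hproj f hf
  simp [h1 g hg x hx, h2 h hh x hx]

lemma sup_smProd_eq_bot {B₁ B₂ A : Submodule R M}
    (h1 : SmProd B₁ A = ⊥) (h2 : SmProd B₂ A = ⊥) : SmProd (B₁ ⊔ B₂) A = ⊥ := by
  rw [smProd_eq_bot_iff] at *
  intro f hf x hx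
  obtain ⟨y, hy, z, hz, rfl⟩ := Submodule.mem_sup.1 hx
  simp [h1 f hf y hy, h2 f hf z hz]

lemma smProd_eq_bot_mono {B B' A A' : Submodule R M} (hB : B' ≤ B) (hA : A' ≤ A)
    (h : SmProd B A = ⊥) : SmProd B' A' = ⊥ := by
  rw [smProd_eq_bot_iff] at *
  exact fun f hf x hx => h f (hf.trans hA) x (hB hx)

/-- Compactness makes the sum of a nonempty chain of proper fully invariant submodules
proper, so Zorn's lemma applies. -/
lemma exists_isMaxFI_ge (hc : FICompact R M) {X : Submodule R M} (hX : IsFI X) (hX' : X ≠ ⊤) :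
    ∃ P, IsMaxFI P ∧ X ≤ P := by
  obtain ⟨P, hXP, hP⟩ := zorn_le_nonempty₀ {N : Submodule R M | IsFI N ∧ N ≠ ⊤} (by
    intro c hcs hchain Y hY
    refine ⟨sSup c, ⟨isFI_sSup fun N hN => (hcs hN).1, fun htop => ?_⟩, fun N hN => le_sSup hN⟩
    obtain ⟨F, hFc, hF⟩ := hc c (fun N hN => (hcs hN).1) htop
    -- a finite part of the nonempty chain `c` is dominated by one of its members
    have key : ∀ F : Finset (Submodule R M), ↑F ⊆ c → ∃ Z ∈ c, ∀ N ∈ F, N ≤ Z := by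
      classical
      intro F
      induction F using Finset.induction_on with
      | empty => exact fun _ => ⟨Y, hY, by simp⟩
      | insert a s _ ih =>
        intro h
        rw [Finset.coe_insert, Set.insert_subset_iff] at h
        obtain ⟨Z, hZ, hs⟩ := ih h.2
        rcases hchain.total h.1 hZ with haZ | hZa
        · exact ⟨Z, hZ, by simpa [haZ] using hs⟩
        · exact ⟨a, h.1, by simpa using fun N hN => (hs N hN).trans hZa⟩
    obtain ⟨Z, hZ, hFZ⟩ := key F hFc
    exact (hcs hZ).2 (top_le_iff.1 (hF ▸ sSup_le fun N hN => hFZ N hN))) X ⟨hX, hX'⟩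
  refine ⟨P, ⟨hP.prop.1, hP.prop.2, fun L hL hPL => ?_⟩, hXP⟩
  by_contra hL'
  exact hPL.not_ge (hP.le_of_ge ⟨hL, hL'⟩ hPL.le)

/-- The compactness step: if a class `Φ` of fully invariant submodules closed under finite sums
contains, for every maximal fully invariant `P ⊇ X`, a member outside `P`, then some member of
`Φ` is a supplement of `X`. -/
lemma exists_sup_eq_top (hc : FICompact R M) {X : Submodule R M} (hX : IsFI X)
    (Φ : Submodule R M → Prop) (hbot : Φ ⊥)
    (hsup : ∀ A B, Φ A → Φ B → Φ (A ⊔ B)) (hfi : ∀ A, Φ A → IsFI A)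
    (h : ∀ P, IsMaxFI P → X ≤ P → ∃ A, Φ A ∧ ¬ A ≤ P) :
    ∃ A, Φ A ∧ X ⊔ A = ⊤ := by
  have hS : ∀ N ∈ insert X {A | Φ A}, IsFI N := by
    rintro N (rfl | hN)
    exacts [hX, hfi N hN]
  have htop : sSup (insert X {A | Φ A}) = ⊤ := by
    by_contra hne
    obtain ⟨P, hP, hle⟩ := exists_isMaxFI_ge hc (isFI_sSup hS) hne
    obtain ⟨A, hA, hAP⟩ := h P hP ((le_sSup (Set.mem_insert _ _)).trans hle)
    exact hAP ((le_sSup (Set.mem_insert_of_mem _ hA)).trans hle)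
  obtain ⟨F, hFS, hF⟩ := hc _ hS htop
  have key : ∀ F : Finset (Submodule R M), ↑F ⊆ insert X {A | Φ A} →
      ∃ A, Φ A ∧ ∀ N ∈ F, N ≤ X ⊔ A := by
    classical
    intro F
    induction F using Finset.induction_on with
    | empty => exact fun _ => ⟨⊥, hbot, by simp⟩
    | insert a s _ ih =>
      intro h
      rw [Finset.coe_insert, Set.insert_subset_iff] at h
      obtain ⟨A, hA, hs⟩ := ih h.2
      rcases h.1 with rfl | ha
      · exact ⟨A, hA, by simpa using hs⟩
      · refine ⟨A ⊔ a, hsup _ _ hA ha, fun N hN => ?_⟩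
        rcases Finset.mem_insert.1 hN with rfl | hN
        · exact le_sup_right.trans le_sup_right
        · exact (hs N hN).trans (sup_le_sup_left le_sup_left _)
  obtain ⟨A, hA, hFA⟩ := key F hFS
  exact ⟨A, hA, top_le_iff.1 (hF ▸ sSup_le fun N hN => hFA N hN)⟩

/-- For `M` projective: if `Λ^{fi}(M)` is normal then `M` is strongly
harmonic; if moreover `Λ^{fi}(M)` is compact, the converse holds. -/
theorem fiNormal_stronglyHarmonic (hproj : Module.Projective R M) :
    (FINormal R M → StronglyHarmonic R M) ∧
    (FICompact R M → (StronglyHarmonic R M → FINormal R M)) := by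
  refine ⟨fun hn N L hN hL hNL => ?_, fun hc hs N L hN hL hNL => ?_⟩
  · have hLN : ¬ L ≤ N := fun h => hN.2.1 (hL.2.2 N hN.1 (h.lt_of_ne hNL.symm))
    obtain ⟨N', L', hN', hL', h1, h2, h3⟩ := hn N L hN.1 hL.1 (hN.sup_eq_top hL.1 hLN)
    refine ⟨L', N', hL', hN', fun h => hN.2.1 ?_, fun h => hL.2.1 ?_, h3⟩
    · rwa [sup_eq_left.2 h] at h1
    · rwa [sup_eq_right.2 h] at h2
  · -- separate `N` from a single maximal fully invariant submodule containing `L`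
    have step : ∀ Q, IsMaxFI Q → L ≤ Q →
        ∃ A, (IsFI A ∧ ∃ B, IsFI B ∧ Q ⊔ B = ⊤ ∧ SmProd B A = ⊥) ∧ N ⊔ A = ⊤ := by
      intro Q hQ hLQ
      refine exists_sup_eq_top hc hN _ ⟨isFI_bot, ⊤, isFI_top, by simp, ?_⟩ ?_ (fun A h => h.1) ?_
      · rw [smProd_eq_bot_iff]
        exact fun f hf x _ => (Submodule.mem_bot R).1 (hf ⟨x, rfl⟩)
      · rintro A₁ A₂ ⟨hA₁, B₁, hB₁, hQ₁, h₁⟩ ⟨hA₂, B₂, hB₂, hQ₂, h₂⟩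
        exact ⟨hA₁.sup hA₂, B₁ ⊓ B₂, hB₁.inf hB₂, sup_inf_eq_top hproj hQ.1 hB₁ hQ₁ hQ₂,
          smProd_sup_eq_bot hproj (smProd_eq_bot_mono inf_le_left le_rfl h₁)
            (smProd_eq_bot_mono inf_le_right le_rfl h₂)⟩
      · intro P hP hNP
        have hPQ : P ≠ Q := by
          rintro rfl
          exact hP.2.1 (top_le_iff.1 (hNL ▸ sup_le hNP hLQ))
        obtain ⟨A, B, hA, hB, hAP, hBQ, h0⟩ := hs P Q hP hQ hPQ
        exact ⟨A, ⟨hA, B, hB, hQ.sup_eq_top hB hBQ, h0⟩, hAP⟩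
    obtain ⟨B, ⟨hB, A, hA, hNA, h0⟩, hLB⟩ := exists_sup_eq_top hc hL
      (fun B => IsFI B ∧ ∃ A, IsFI A ∧ N ⊔ A = ⊤ ∧ SmProd B A = ⊥)
      ⟨isFI_bot, ⊤, isFI_top, by simp, by
        rw [smProd_eq_bot_iff]
        intro f _ x hx
        rw [(Submodule.mem_bot R).1 hx, map_zero]⟩
      (by
        rintro B₁ B₂ ⟨hB₁, A₁, hA₁, hN₁, h₁⟩ ⟨hB₂, A₂, hA₂, hN₂, h₂⟩
        exact ⟨hB₁.sup hB₂, A₁ ⊓ A₂, hA₁.inf hA₂, sup_inf_eq_top hproj hN hA₁ hN₁ hN₂,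
          sup_smProd_eq_bot (smProd_eq_bot_mono le_rfl inf_le_left h₁)
            (smProd_eq_bot_mono le_rfl inf_le_right h₂)⟩)
      (fun B h => h.1)
      (by
        intro Q hQ hLQ
        obtain ⟨A, ⟨hA, B, hB, hQB, h0⟩, hNA⟩ := step Q hQ hLQ
        refine ⟨B, ⟨hB, A, hA, hNA, h0⟩, fun h => hQ.2.1 ?_⟩
        rwa [sup_eq_left.2 h] at hQB)
    exact ⟨B, A, hB, hA, hNA, sup_comm L B ▸ hLB, h0⟩
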